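/- arXiv:1010.3362 — 3 statements merged into one kernel-verified Lean document; each statement's English description precedes it below -/
import Mathlib

section
/- Let P be an m×m matrix with non-negative entries which is irreducible. If the equivalence relation ∼ on {1,…,m} generated by declaring i ∼ j whenever there exists k with P_{ik} > 0 and P_{jk} > 0 has just one equivalence class, then P is strictly irreducible (i.e., PPᵀ is also irreducible). -/
open Matrix
/-- A matrix with non-negative entries is irreducible if for some `n > 0`
all entries of `A + A² + ⋯ + Aⁿ` are positive. -/
def MatrixIrreducible {m : ℕ} (A : Matrix (Fin m) (Fin m) ℝ) : Prop :=
  ∃ n : ℕ, 0 < n ∧ ∀ i j : Fin m, 0 < (∑ k ∈ Finset.range n, A ^ (k + 1)) i j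

theorem Matrix.mul_apply_pos {m : ℕ} {A B : Matrix (Fin m) (Fin m) ℝ}
    (hA : ∀ i j, 0 ≤ A i j) (hB : ∀ i j, 0 ≤ B i j) {i j k : Fin m}
    (hij : 0 < A i j) (hjk : 0 < B j k) : 0 < (A * B) i k := by
  rw [Matrix.mul_apply]
  exact Finset.sum_pos' (fun l _ => mul_nonneg (hA i l) (hB l k))
    ⟨j, Finset.mem_univ j, mul_pos hij hjk⟩

theorem Matrix.mul_apply_nonneg {m : ℕ} {A B : Matrix (Fin m) (Fin m) ℝ}
    (hA : ∀ i j, 0 ≤ A i j) (hB : ∀ i j, 0 ≤ B i j) (i k : Fin m) : 0 ≤ (A * B) i k := by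
  rw [Matrix.mul_apply]
  exact Finset.sum_nonneg fun l _ => mul_nonneg (hA i l) (hB l k)

theorem Matrix.pow_succ_apply_nonneg {m : ℕ} {A : Matrix (Fin m) (Fin m) ℝ}
    (hA : ∀ i j, 0 ≤ A i j) (n : ℕ) : ∀ i j, 0 ≤ (A ^ (n + 1)) i j := by
  induction n with
  | zero => simpa using hA
  | succ n ih =>
    rw [pow_succ]
    exact Matrix.mul_apply_nonneg ih hA

theorem MatrixIrreducible.of_forall_exists_pow_pos {m : ℕ} {A : Matrix (Fin m) (Fin m) ℝ}
    (hA : ∀ i j, 0 ≤ A i j) (h : ∀ i j, ∃ n : ℕ, 0 < (A ^ (n + 1)) i j) :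
    MatrixIrreducible A := by
  choose f hf using h
  refine ⟨(Finset.univ.sup fun p : Fin m × Fin m => f p.1 p.2) + 1, Nat.succ_pos _,
    fun i j => ?_⟩
  rw [Matrix.sum_apply]
  refine Finset.sum_pos' (fun n _ => Matrix.pow_succ_apply_nonneg hA n i j) ⟨f i j, ?_, hf i j⟩
  rw [Finset.mem_range, Nat.lt_succ_iff]
  exact Finset.le_sup (f := fun p : Fin m × Fin m => f p.1 p.2) (Finset.mem_univ (i, j))

theorem MatrixIrreducible.exists_pos_of_nonneg {m : ℕ} {A : Matrix (Fin m) (Fin m) ℝ}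
    (h : MatrixIrreducible A) (hA : ∀ i j, 0 ≤ A i j) (i : Fin m) : ∃ k, 0 < A i k := by
  by_contra! hrow
  have hzero : ∀ k, A i k = 0 := fun k => le_antisymm (hrow k) (hA i k)
  obtain ⟨n, -, hn⟩ := h
  refine (hn i i).ne' ?_
  rw [Matrix.sum_apply]
  refine Finset.sum_eq_zero fun k _ => ?_
  rw [pow_succ', Matrix.mul_apply]
  simp [hzero]

/-- Let `P` be an `m × m` matrix with non-negative entries which is
irreducible.  If the equivalence relation `∼` on the index set generated by declaring
`i ∼ j` whenever there is `k` with `P i k > 0` and `P j k > 0` has just one equivalence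
class, then `P` is strictly irreducible, i.e. `P * Pᵀ` is also irreducible. -/
theorem strictly_irreducible_of_one_equivalence_class {m : ℕ}
    (P : Matrix (Fin m) (Fin m) ℝ) (hnonneg : ∀ i j, 0 ≤ P i j)
    (hirr : MatrixIrreducible P)
    (hone : ∀ i j : Fin m,
      Relation.EqvGen (fun i j => ∃ k, 0 < P i k ∧ 0 < P j k) i j) :
    MatrixIrreducible P ∧ MatrixIrreducible (P * Pᵀ) := by
  have htranspose : ∀ i j, 0 ≤ Pᵀ i j := fun i j => hnonneg j i
  have hA : ∀ i j, 0 ≤ (P * Pᵀ) i j := Matrix.mul_apply_nonneg hnonneg htranspose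
  have hsymm : (P * Pᵀ)ᵀ = P * Pᵀ := by simp
  have hcommon : ∀ {i j k}, 0 < P i k → 0 < P j k → 0 < (P * Pᵀ) i j := fun hi hj =>
    Matrix.mul_apply_pos hnonneg htranspose hi hj
  refine ⟨hirr, MatrixIrreducible.of_forall_exists_pow_pos hA fun i j => ?_⟩
  induction hone i j with
  | rel i j h =>
    obtain ⟨k, hi, hj⟩ := h
    exact ⟨0, by simpa only [zero_add, pow_one] using hcommon hi hj⟩
  | refl i =>
    obtain ⟨k, hk⟩ := hirr.exists_pos_of_nonneg hnonneg i
    exact ⟨0, by simpa only [zero_add, pow_one] using hcommon hk hk⟩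
  | symm i j _ ih =>
    obtain ⟨n, hn⟩ := ih
    refine ⟨n, ?_⟩
    rwa [← hsymm, ← Matrix.transpose_pow, Matrix.transpose_apply]
  | trans i j k _ _ ihij ihjk =>
    obtain ⟨a, ha⟩ := ihij
    obtain ⟨b, hb⟩ := ihjk
    refine ⟨a + 1 + b, ?_⟩
    rw [add_assoc (a + 1), pow_add]
    exact Matrix.mul_apply_pos (Matrix.pow_succ_apply_nonneg hA a)
      (Matrix.pow_succ_apply_nonneg hA b) ha hb
end

section
/- Let P be an m×m matrix with non-negative entries which is irreducible. Suppose there exist indices j_0, j_1, …, j_r in {1,…,m} such that (i) for every index k ∈ {1,…,m} there is some i ∈ {0,…,r} with P_{j_i, k} > 0 (the rows j_0,…,j_r jointly cover all columns), and (ii) for each i = 0,…,r−1 there exists an index k with P_{j_i, k} > 0 and P_{j_{i+1}, k} > 0 (consecutive rows overlap). Then P is strictly irreducible. -/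
open Matrix

/-- Every row of an irreducible matrix with non-negative entries has a positive entry. -/
theorem MatrixIrreducible.exists_pos_row {m : ℕ} {A : Matrix (Fin m) (Fin m) ℝ}
    (hA : ∀ i j, 0 ≤ A i j) (h : MatrixIrreducible A) (a : Fin m) : ∃ k, 0 < A a k := by
  obtain ⟨n, -, hpos⟩ := h
  by_contra! hrow
  have hzero : ∀ k, A a k = 0 := fun k => le_antisymm (hrow k) (hA a k)
  refine (hpos a a).ne' ?_
  rw [Matrix.sum_apply]
  refine Finset.sum_eq_zero fun k _ => ?_
  simp [pow_succ', Matrix.mul_apply, hzero]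

/-- The entries of the powers of an entrywise non-negative matrix are non-negative. -/
theorem matrix_pow_apply_nonneg {m : ℕ} {A : Matrix (Fin m) (Fin m) ℝ}
    (hA : ∀ i j, 0 ≤ A i j) (n : ℕ) : ∀ i j, 0 ≤ (A ^ n) i j := by
  induction n with
  | zero =>
    intro i j
    rw [pow_zero, Matrix.one_apply]
    split_ifs <;> norm_num
  | succ n ih =>
    intro i j
    rw [pow_succ, Matrix.mul_apply]
    exact Finset.sum_nonneg fun k _ => mul_nonneg (ih i k) (hA k j)

/-- A path along positive entries yields a positive entry of some positive power. -/
theorem exists_pow_apply_pos_of_transGen {m : ℕ} {A : Matrix (Fin m) (Fin m) ℝ}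
    (hA : ∀ i j, 0 ≤ A i j) {a b : Fin m}
    (h : Relation.TransGen (fun i j => 0 < A i j) a b) : ∃ n : ℕ, 0 < (A ^ (n + 1)) a b := by
  induction h with
  | single h => exact ⟨0, by simpa using h⟩
  | @tail b c _ hbc ih =>
    obtain ⟨n, hn⟩ := ih
    refine ⟨n + 1, ?_⟩
    rw [pow_succ, Matrix.mul_apply]
    exact Finset.sum_pos'
      (fun k _ => mul_nonneg (matrix_pow_apply_nonneg hA _ a k) (hA k c))
      ⟨b, Finset.mem_univ b, mul_pos hn hbc⟩

/-- A non-negative matrix is irreducible if any two indices are joined by a path along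
positive entries. -/
theorem matrixIrreducible_of_transGen {m : ℕ} {A : Matrix (Fin m) (Fin m) ℝ}
    (hA : ∀ i j, 0 ≤ A i j)
    (h : ∀ a b, Relation.TransGen (fun i j => 0 < A i j) a b) : MatrixIrreducible A := by
  choose n hn using fun p : Fin m × Fin m => exists_pow_apply_pos_of_transGen hA (h p.1 p.2)
  refine ⟨Finset.univ.sup n + 1, Nat.succ_pos _, fun a b => ?_⟩
  rw [Matrix.sum_apply]
  exact Finset.sum_pos' (fun k _ => matrix_pow_apply_nonneg hA _ a b)
    ⟨n (a, b), Finset.mem_range.2 (Nat.lt_succ_of_le (Finset.le_sup (Finset.mem_univ (a, b)))),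
      hn (a, b)⟩

/-- Two rows of a non-negative matrix `A` with a common positive column give a positive entry
of `A * Aᵀ`. -/
theorem mul_transpose_apply_pos {m : ℕ} {A : Matrix (Fin m) (Fin m) ℝ}
    (hA : ∀ i j, 0 ≤ A i j) {a b k : Fin m} (ha : 0 < A a k) (hb : 0 < A b k) :
    0 < (A * Aᵀ) a b := by
  rw [Matrix.mul_apply]
  exact Finset.sum_pos' (fun l _ => mul_nonneg (hA a l) (hA b l))
    ⟨k, Finset.mem_univ k, mul_pos ha hb⟩

/-- Let `P` be an irreducible `m × m` matrix with non-negative entries.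
Suppose there are indices `j 0, …, j r` such that (i) every column contains a positive
entry in one of the rows `j 0, …, j r`, and (ii) consecutive rows `j i`, `j (i+1)`
have a common column where both are positive.  Then `P` is strictly irreducible. -/
theorem strictly_irreducible_of_covering_chain {m : ℕ}
    (P : Matrix (Fin m) (Fin m) ℝ) (hnonneg : ∀ i j, 0 ≤ P i j)
    (hirr : MatrixIrreducible P)
    (r : ℕ) (j : Fin (r + 1) → Fin m)
    (hcover : ∀ k : Fin m, ∃ i : Fin (r + 1), 0 < P (j i) k)
    (hchain : ∀ i : Fin r, ∃ k : Fin m,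
      0 < P (j i.castSucc) k ∧ 0 < P (j i.succ) k) :
    MatrixIrreducible P ∧ MatrixIrreducible (P * Pᵀ) := by
  refine ⟨hirr, matrixIrreducible_of_transGen (fun a b => ?_) fun a b => ?_⟩
  · rw [Matrix.mul_apply]
    exact Finset.sum_nonneg fun k _ => mul_nonneg (hnonneg a k) (hnonneg b k)
  · let R : Fin m → Fin m → Prop := fun a b => 0 < (P * Pᵀ) a b
    have hfrom : ∀ i, Relation.ReflTransGen R (j 0) (j i) := by
      intro i
      induction i using Fin.induction with
      | zero => exact .refl
      | succ i ih =>
        obtain ⟨k, h₁, h₂⟩ := hchain i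
        exact ih.tail (mul_transpose_apply_pos hnonneg h₁ h₂)
    have hto : ∀ i, Relation.ReflTransGen R (j i) (j 0) := by
      intro i
      induction i using Fin.induction with
      | zero => exact .refl
      | succ i ih =>
        obtain ⟨k, h₁, h₂⟩ := hchain i
        exact ih.head (mul_transpose_apply_pos hnonneg h₂ h₁)
    obtain ⟨k, hk⟩ := hirr.exists_pos_row hnonneg a
    obtain ⟨l, hl⟩ := hirr.exists_pos_row hnonneg b
    obtain ⟨i, hi⟩ := hcover k
    obtain ⟨i', hi'⟩ := hcover l
    have hstart : R a (j i) := mul_transpose_apply_pos hnonneg hk hi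
    have hend : R (j i') b := mul_transpose_apply_pos hnonneg hi' hl
    exact .tail' (((hto i).trans (hfrom i')).head hstart) hend
end

section
/- Let P be the 8×8 matrix with entries in {0,1} defined by P_{kl} = 1 if and only if (k,l) ∈ {(1,1),(1,2),(2,3),(2,4),(3,7),(4,8),(5,1),(6,2),(7,5),(7,6),(8,7),(8,8)}. Then P·Pᵀ is not irreducible; consequently P is not strictly irreducible. -/
open Matrix

/-- A matrix is strictly irreducible if both `A` and `A * Aᵀ` are irreducible. -/
def MatrixStrictlyIrreducible {m : ℕ} (A : Matrix (Fin m) (Fin m) ℝ) : Prop :=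
  MatrixIrreducible A ∧ MatrixIrreducible (A * Aᵀ)

/-- The set of allowed transitions (indices shifted down by one from the paper's
`1, …, 8` to `Fin 8`): `{(1,1),(1,2),(2,3),(2,4),(3,7),(4,8),(5,1),(6,2),(7,5),
(7,6),(8,7),(8,8)}`. -/
def modTransitions : Set (Fin 8 × Fin 8) :=
  {(0,0), (0,1), (1,2), (1,3), (2,6), (3,7), (4,0), (5,1), (6,4), (6,5), (7,6), (7,7)}

/-- The `8 × 8` transition matrix of the continued-fraction Markov map for `PSL(2,ℤ)`:
`P k l = 1` if `(k,l)` is an allowed transition, and `P k l = 0` otherwise. -/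
noncomputable def modMatrix : Matrix (Fin 8) (Fin 8) ℝ :=
  open scoped Classical in
  fun k l => if (k, l) ∈ modTransitions then 1 else 0

/-- If no entry of `A` leads from `S` to its complement, then neither does any entry of a
positive power of `A`. -/
theorem Matrix.pow_succ_apply_eq_zero_of_invariant {ι R : Type*} [Fintype ι] [DecidableEq ι]
    [Semiring R] {A : Matrix ι ι R} {S : Set ι} (hA : ∀ i ∈ S, ∀ j ∉ S, A i j = 0) (k : ℕ)
    {i j : ι} (hi : i ∈ S) (hj : j ∉ S) : (A ^ (k + 1)) i j = 0 := by
  induction k generalizing j with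
  | zero => simpa using hA i hi j hj
  | succ k ih =>
    rw [pow_succ, Matrix.mul_apply]
    refine Finset.sum_eq_zero fun l _ => ?_
    by_cases hl : l ∈ S
    · rw [hA l hl j hj, mul_zero]
    · rw [ih hl, zero_mul]

/-- A matrix with a nontrivial invariant set of indices is not irreducible. -/
theorem not_matrixIrreducible_of_invariant {m : ℕ} {A : Matrix (Fin m) (Fin m) ℝ}
    {S : Set (Fin m)} (hA : ∀ i ∈ S, ∀ j ∉ S, A i j = 0) {i j : Fin m} (hi : i ∈ S)
    (hj : j ∉ S) : ¬ MatrixIrreducible A := by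
  rintro ⟨n, -, hpos⟩
  refine (hpos i j).ne' ?_
  rw [Matrix.sum_apply]
  exact Finset.sum_eq_zero fun k _ => Matrix.pow_succ_apply_eq_zero_of_invariant hA k hi hj

/-- The second row of `modMatrix` is orthogonal to every other row. -/
theorem modMatrix_mul_transpose_one_apply {j : Fin 8} (hj : j ≠ 1) :
    (modMatrix * modMatrixᵀ) 1 j = 0 := by
  rw [Matrix.mul_apply]
  refine Finset.sum_eq_zero fun l _ => ?_
  have h : (1, l) ∉ modTransitions ∨ (j, l) ∉ modTransitions := by
    fin_cases j <;> fin_cases l <;> simp [modTransitions] at hj ⊢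
  rcases h with h | h <;> simp [modMatrix, h]

/-- `P * Pᵀ` is not irreducible; consequently, `P` is not strictly
irreducible. -/
theorem modMatrix_not_strictly_irreducible :
    ¬ MatrixIrreducible (modMatrix * modMatrixᵀ) ∧
    ¬ MatrixStrictlyIrreducible modMatrix := by
  have h : ¬ MatrixIrreducible (modMatrix * modMatrixᵀ) := by
    refine not_matrixIrreducible_of_invariant (S := {1}) (i := 1) (j := 0) ?_ rfl (by simp)
    rintro _ rfl j hj
    exact modMatrix_mul_transpose_one_apply hj
  exact ⟨h, fun hP => h hP.2⟩
end
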